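/- Let (V, μ, α) be a finite-dimensional G-Hom-associative algebra for a subgroup G of S₃. Then the dual space V* with comultiplication Δ = μ* (the transpose of μ) and twisting map β = α* is a G-Hom-coalgebra: Σ_{σ∈G} sgn(σ) Φ_σ ∘ c_β(Δ) = 0. -/

import Mathlib

open TensorProduct

noncomputable section

variable (K : Type*) [Field K] (M : Type*) [AddCommGroup M] [Module K M]

/-- The permutation `Φ_{(12)}` of the first two tensor factors of `M ⊗ (M ⊗ M)`. -/
def phi12 : M ⊗[K] (M ⊗[K] M) →ₗ[K] M ⊗[K] (M ⊗[K] M) :=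
  (TensorProduct.assoc K M M M).toLinearMap ∘ₗ
    LinearMap.rTensor M (TensorProduct.comm K M M).toLinearMap ∘ₗ
      (TensorProduct.assoc K M M M).symm.toLinearMap

/-- The permutation `Φ_{(23)}` of the last two tensor factors. -/
def phi23 : M ⊗[K] (M ⊗[K] M) →ₗ[K] M ⊗[K] (M ⊗[K] M) :=
  LinearMap.lTensor M (TensorProduct.comm K M M).toLinearMap

/-- `Φ_{(13)}`: x₁⊗x₂⊗x₃ ↦ x₃⊗x₂⊗x₁. -/
def phi13 : M ⊗[K] (M ⊗[K] M) →ₗ[K] M ⊗[K] (M ⊗[K] M) :=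
  phi12 K M ∘ₗ phi23 K M ∘ₗ phi12 K M

/-- `Φ_{(213)}`: x₁⊗x₂⊗x₃ ↦ x₂⊗x₃⊗x₁. -/
def phi213 : M ⊗[K] (M ⊗[K] M) →ₗ[K] M ⊗[K] (M ⊗[K] M) :=
  phi23 K M ∘ₗ phi12 K M

/-- `Φ_{(231)}`: x₁⊗x₂⊗x₃ ↦ x₃⊗x₁⊗x₂. -/
def phi231 : M ⊗[K] (M ⊗[K] M) →ₗ[K] M ⊗[K] (M ⊗[K] M) :=
  phi12 K M ∘ₗ phi23 K M

/-- The `β`-coassociator `c_β(Δ) = (Δ⊗β)∘Δ - (β⊗Δ)∘Δ`, valued in `M ⊗ (M ⊗ M)`. -/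
def coassociator (Δ : M →ₗ[K] M ⊗[K] M) (β : M →ₗ[K] M) :
    M →ₗ[K] M ⊗[K] (M ⊗[K] M) :=
  (TensorProduct.assoc K M M M).toLinearMap ∘ₗ TensorProduct.map Δ β ∘ₗ Δ
    - TensorProduct.map β Δ ∘ₗ Δ

/-- The opposite comultiplication `Δ^op = τ ∘ Δ`. -/
def deltaOp (Δ : M →ₗ[K] M ⊗[K] M) : M →ₗ[K] M ⊗[K] M :=
  (TensorProduct.comm K M M).toLinearMap ∘ₗ Δ

/-- The map `Φ_σ` on `M ⊗ (M ⊗ M)` induced by `σ ∈ S₃` (on positions `0,1,2`),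
`x₁⊗x₂⊗x₃ ↦ x_{σ⁻¹(1)}⊗x_{σ⁻¹(2)}⊗x_{σ⁻¹(3)}`. -/
def Phi (σ : Equiv.Perm (Fin 3)) : M ⊗[K] (M ⊗[K] M) →ₗ[K] M ⊗[K] (M ⊗[K] M) :=
  if σ = 1 then LinearMap.id
  else if σ = Equiv.swap 0 1 then phi12 K M
  else if σ = Equiv.swap 1 2 then phi23 K M
  else if σ = Equiv.swap 0 2 then phi13 K M
  else if σ = Equiv.swap 0 1 * Equiv.swap 1 2 then phi231 K M
  else phi213 K M

/-!
The transpose is computed through the pairing of `M* ⊗ (M* ⊗ M*)` with `M ⊗ (M ⊗ M)`. Under this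
pairing the coassociator of a comultiplication transposed from `μ` is the transpose of the
`α`-associator of `μ`, and `Φ_σ` is the transpose of `Φ_{σ⁻¹}`. As `sgn σ = sgn σ⁻¹` and `G` is
closed under inversion, the whole alternating sum of coassociators is the transpose of the
alternating sum of associators. Over a field the pairing embeds the triple tensor product of duals
in the dual, in any dimension, and the transpose of a map vanishes only if the map does.
-/

section DualDistrib

open Module

variable {R M₁ M₂ M₃ N₁ N₂ : Type*} [CommSemiring R]
  [AddCommMonoid M₁] [AddCommMonoid M₂] [AddCommMonoid M₃] [AddCommMonoid N₁] [AddCommMonoid N₂]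
  [Module R M₁] [Module R M₂] [Module R M₃] [Module R N₁] [Module R N₂]

theorem dualTensorHom_injective_of_projective_right [Projective R M₂] :
    Function.Injective (dualTensorHom R M₁ M₂) := by
  classical
  obtain ⟨s, hs⟩ := projective_def'.mp ‹Projective R M₂›
  have finsupp_injective : Function.Injective (dualTensorHom R M₁ (M₂ →₀ R)) := by
    have self_injective : Function.Injective (dualTensorHom R M₁ R) := by
      rw [dualTensorHom_self_right]
      exact (TensorProduct.rid R _).injective
    rw [dualTensorHom_finsupp]
    exact (LinearMap.finsuppLinearMap_injective ..).comp
      ((Finsupp.mapRange_injective _ (map_zero _) self_injective).comp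
        (finsuppRight R R (Dual R M₁) R M₂).injective)
  have lTensor_injective : Function.Injective (s.lTensor (Dual R M₁)) :=
    LinearMap.injective_of_comp_eq_id _ ((Finsupp.linearCombination R id).lTensor _) <| by
      rw [← LinearMap.lTensor_comp, hs, LinearMap.lTensor_id]
  refine .of_comp (f := s.compRight R) ?_
  rw [← LinearMap.coe_comp, ← dualTensorHom_comp_lTensor]
  exact finsupp_injective.comp lTensor_injective

theorem dualDistrib_injective_of_projective_dual_right [Projective R (Dual R M₂)] :
    Function.Injective (dualDistrib R M₁ M₂) := by
  have factor : dualDistrib R M₁ M₂ =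
      (lift.equiv (.id R) M₁ M₂ R).toLinearMap ∘ₗ dualTensorHom R M₁ (Dual R M₂) := by
    ext; simp
  rw [factor]
  exact (lift.equiv (.id R) M₁ M₂ R).injective.comp dualTensorHom_injective_of_projective_right

theorem dualDistrib_map_dualMap (f : M₁ →ₗ[R] N₁) (g : M₂ →ₗ[R] N₂)
    (t : Dual R N₁ ⊗[R] Dual R N₂) :
    dualDistrib R M₁ M₂ (TensorProduct.map f.dualMap g.dualMap t) =
      dualDistrib R N₁ N₂ t ∘ₗ TensorProduct.map f g := by
  induction t with
  | zero => simp
  | tmul φ ψ => ext; simp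
  | add s t hs ht => simp only [map_add, hs, ht, LinearMap.add_comp]

variable (R M₁ M₂ M₃) in
/-- The pairing of `M₁* ⊗ (M₂* ⊗ M₃*)` with `M₁ ⊗ (M₂ ⊗ M₃)`, in curried form: the threefold
analogue of `TensorProduct.dualDistrib`, bracketed to the right. -/
def dualDistrib₃ :
    Dual R M₁ ⊗[R] (Dual R M₂ ⊗[R] Dual R M₃) →ₗ[R] Dual R (M₁ ⊗[R] (M₂ ⊗[R] M₃)) :=
  dualDistrib R M₁ (M₂ ⊗[R] M₃) ∘ₗ LinearMap.lTensor (Dual R M₁) (dualDistrib R M₂ M₃)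

@[simp]
theorem dualDistrib₃_tmul (f : Dual R M₁) (g : Dual R M₂) (h : Dual R M₃)
    (x : M₁) (y : M₂) (z : M₃) :
    dualDistrib₃ R M₁ M₂ M₃ (f ⊗ₜ (g ⊗ₜ h)) (x ⊗ₜ (y ⊗ₜ z)) = f x * (g y * h z) :=
  rfl

theorem dualDistrib₃_injective [Flat R (Dual R M₁)] [Projective R (Dual R M₃)]
    [Projective R (Dual R (M₂ ⊗[R] M₃))] :
    Function.Injective (dualDistrib₃ R M₁ M₂ M₃) :=
  dualDistrib_injective_of_projective_dual_right.comp
    (Flat.lTensor_preserves_injective_linearMap _ dualDistrib_injective_of_projective_dual_right)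

theorem dualDistrib₃_assoc (t : (Dual R M₁ ⊗[R] Dual R M₂) ⊗[R] Dual R M₃) :
    dualDistrib₃ R M₁ M₂ M₃ (TensorProduct.assoc R _ _ _ t) =
      dualDistrib R (M₁ ⊗[R] M₂) M₃ (LinearMap.rTensor _ (dualDistrib R M₁ M₂) t) ∘ₗ
        (TensorProduct.assoc R M₁ M₂ M₃).symm.toLinearMap := by
  suffices h : dualDistrib₃ R M₁ M₂ M₃ ∘ₗ (TensorProduct.assoc R _ _ _).toLinearMap =
      (TensorProduct.assoc R M₁ M₂ M₃).symm.toLinearMap.dualMap ∘ₗ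
        dualDistrib R (M₁ ⊗[R] M₂) M₃ ∘ₗ LinearMap.rTensor _ (dualDistrib R M₁ M₂) from
    LinearMap.congr_fun h t
  ext
  simp [mul_assoc]

theorem dualDistrib₃_assoc_map_dualMap {μ : M₁ ⊗[R] M₂ →ₗ[R] N₁}
    {Δ : Dual R N₁ →ₗ[R] Dual R M₁ ⊗[R] Dual R M₂} (hΔ : dualDistrib R M₁ M₂ ∘ₗ Δ = μ.dualMap)
    (α : M₃ →ₗ[R] N₂) (t : Dual R N₁ ⊗[R] Dual R N₂) :
    dualDistrib₃ R M₁ M₂ M₃ (TensorProduct.assoc R _ _ _ (TensorProduct.map Δ α.dualMap t)) =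
      dualDistrib R N₁ N₂ t ∘ₗ TensorProduct.map μ α ∘ₗ
        (TensorProduct.assoc R M₁ M₂ M₃).symm.toLinearMap := by
  rw [dualDistrib₃_assoc, ← LinearMap.comp_apply (LinearMap.rTensor _ _),
    LinearMap.rTensor_comp_map, hΔ, dualDistrib_map_dualMap, LinearMap.comp_assoc]

theorem dualDistrib₃_map_dualMap {μ : M₂ ⊗[R] M₃ →ₗ[R] N₂}
    {Δ : Dual R N₂ →ₗ[R] Dual R M₂ ⊗[R] Dual R M₃} (hΔ : dualDistrib R M₂ M₃ ∘ₗ Δ = μ.dualMap)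
    (α : M₁ →ₗ[R] N₁) (t : Dual R N₁ ⊗[R] Dual R N₂) :
    dualDistrib₃ R M₁ M₂ M₃ (TensorProduct.map α.dualMap Δ t) =
      dualDistrib R N₁ N₂ t ∘ₗ TensorProduct.map α μ := by
  rw [dualDistrib₃, LinearMap.comp_apply, ← LinearMap.comp_apply (LinearMap.lTensor _ _),
    LinearMap.lTensor_comp_map, hΔ, dualDistrib_map_dualMap]

end DualDistrib

section Phi

variable {K M}

theorem dualDistrib₃_phi12
    (t : Module.Dual K M ⊗[K] (Module.Dual K M ⊗[K] Module.Dual K M)) :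
    dualDistrib₃ K M M M (phi12 K _ t) = dualDistrib₃ K M M M t ∘ₗ phi12 K M := by
  suffices h : dualDistrib₃ K M M M ∘ₗ phi12 K _ = (phi12 K M).dualMap ∘ₗ dualDistrib₃ K M M M from
    LinearMap.congr_fun h t
  ext
  simp [phi12, mul_left_comm]

theorem dualDistrib₃_phi23
    (t : Module.Dual K M ⊗[K] (Module.Dual K M ⊗[K] Module.Dual K M)) :
    dualDistrib₃ K M M M (phi23 K _ t) = dualDistrib₃ K M M M t ∘ₗ phi23 K M := by
  suffices h : dualDistrib₃ K M M M ∘ₗ phi23 K _ = (phi23 K M).dualMap ∘ₗ dualDistrib₃ K M M M from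
    LinearMap.congr_fun h t
  ext
  simp [phi23, mul_comm]

variable (K M)

theorem Phi_one : Phi K M 1 = LinearMap.id := if_pos rfl

theorem Phi_swap_zero_one : Phi K M (Equiv.swap 0 1) = phi12 K M := by
  simp +decide only [Phi, if_false, if_true]

theorem Phi_swap_one_two : Phi K M (Equiv.swap 1 2) = phi23 K M := by
  simp +decide only [Phi, if_true, if_false]

theorem Phi_swap_zero_two : Phi K M (Equiv.swap 0 2) = phi13 K M := by
  simp +decide only [Phi, if_true, if_false]

theorem Phi_swap_zero_one_mul_swap_one_two :
    Phi K M (Equiv.swap 0 1 * Equiv.swap 1 2) = phi231 K M := by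
  simp +decide only [Phi, if_true, if_false]

theorem Phi_swap_one_two_mul_swap_zero_one :
    Phi K M (Equiv.swap 1 2 * Equiv.swap 0 1) = phi213 K M := by
  simp +decide only [Phi, if_false]

variable {K M}

theorem perm_fin_three_cases (σ : Equiv.Perm (Fin 3)) :
    σ = 1 ∨ σ = Equiv.swap 0 1 ∨ σ = Equiv.swap 1 2 ∨ σ = Equiv.swap 0 2 ∨
      σ = Equiv.swap 0 1 * Equiv.swap 1 2 ∨ σ = Equiv.swap 1 2 * Equiv.swap 0 1 := by
  decide +revert

theorem dualDistrib₃_Phi (σ : Equiv.Perm (Fin 3))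
    (t : Module.Dual K M ⊗[K] (Module.Dual K M ⊗[K] Module.Dual K M)) :
    dualDistrib₃ K M M M (Phi K _ σ t) = dualDistrib₃ K M M M t ∘ₗ Phi K M σ⁻¹ := by
  rcases perm_fin_three_cases σ with rfl | rfl | rfl | rfl | rfl | rfl <;>
    simp only [inv_one, mul_inv_rev, Equiv.swap_inv, Phi_one, Phi_swap_zero_one, Phi_swap_one_two,
      Phi_swap_zero_two, Phi_swap_zero_one_mul_swap_one_two, Phi_swap_one_two_mul_swap_zero_one,
      phi13, phi213, phi231, LinearMap.comp_apply, LinearMap.id_apply, LinearMap.comp_id,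
      dualDistrib₃_phi12, dualDistrib₃_phi23, LinearMap.comp_assoc]

end Phi

section Coassociator

variable {K M}

/-- The `α`-associator `a_{α,μ} = μ ∘ (μ ⊗ α) - μ ∘ (α ⊗ μ)` of a multiplication `μ`, with source
bracketed to the right as in `coassociator`. -/
def homAssociator (μ : M ⊗[K] M →ₗ[K] M) (α : M →ₗ[K] M) : M ⊗[K] (M ⊗[K] M) →ₗ[K] M :=
  μ ∘ₗ TensorProduct.map μ α ∘ₗ (TensorProduct.assoc K M M M).symm.toLinearMap
    - μ ∘ₗ TensorProduct.map α μ

variable {μ : M ⊗[K] M →ₗ[K] M} {Δ : Module.Dual K M →ₗ[K] Module.Dual K M ⊗[K] Module.Dual K M}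

theorem dualDistrib₃_coassociator (hΔ : dualDistrib K M M ∘ₗ Δ = μ.dualMap) (α : M →ₗ[K] M)
    (f : Module.Dual K M) :
    dualDistrib₃ K M M M (coassociator K _ Δ α.dualMap f) = f ∘ₗ homAssociator μ α := by
  have hΔf : dualDistrib K M M (Δ f) = f ∘ₗ μ := LinearMap.congr_fun hΔ f
  calc dualDistrib₃ K M M M (coassociator K _ Δ α.dualMap f)
    _ = dualDistrib₃ K M M M
            (TensorProduct.assoc K _ _ _ (TensorProduct.map Δ α.dualMap (Δ f))) -
          dualDistrib₃ K M M M (TensorProduct.map α.dualMap Δ (Δ f)) :=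
      map_sub (dualDistrib₃ K M M M) _ _
    _ = f ∘ₗ homAssociator μ α := by
      rw [dualDistrib₃_assoc_map_dualMap hΔ, dualDistrib₃_map_dualMap hΔ, hΔf, homAssociator,
        LinearMap.comp_sub, LinearMap.comp_assoc, LinearMap.comp_assoc]

theorem dualDistrib₃_sum_Phi_coassociator (G : Subgroup (Equiv.Perm (Fin 3))) [Fintype G]
    (hΔ : dualDistrib K M M ∘ₗ Δ = μ.dualMap) (α : M →ₗ[K] M) (f : Module.Dual K M) :
    dualDistrib₃ K M M M ((∑ σ : G, (Equiv.Perm.sign (σ : Equiv.Perm (Fin 3)) : ℤ) •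
        (Phi K _ (σ : Equiv.Perm (Fin 3)) ∘ₗ coassociator K _ Δ α.dualMap)) f) =
      f ∘ₗ ∑ σ : G, (Equiv.Perm.sign (σ : Equiv.Perm (Fin 3)) : ℤ) •
        (homAssociator μ α ∘ₗ Phi K M (σ : Equiv.Perm (Fin 3))) := by
  have transpose (σ : Equiv.Perm (Fin 3)) :
      dualDistrib₃ K M M M (Phi K _ σ (coassociator K _ Δ α.dualMap f)) =
        f ∘ₗ homAssociator μ α ∘ₗ Phi K M σ⁻¹ := by
    rw [dualDistrib₃_Phi, dualDistrib₃_coassociator hΔ, LinearMap.comp_assoc]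
  simp only [LinearMap.sum_apply, LinearMap.smul_apply, LinearMap.comp_apply, map_sum,
    transpose, LinearMap.map_smul_of_tower]
  rw [← Equiv.sum_comp (Equiv.inv G)]
  refine LinearMap.ext fun x => ?_
  simp

end Coassociator

theorem dual_of_GHomAssociative_general (G : Subgroup (Equiv.Perm (Fin 3))) [Fintype G]
    (μ : M ⊗[K] M →ₗ[K] M) (α : M →ₗ[K] M)
    (Δ : Module.Dual K M →ₗ[K] Module.Dual K M ⊗[K] Module.Dual K M)
    (hΔ : dualDistrib K M M ∘ₗ Δ = μ.dualMap) :
    ∑ σ : G, (Equiv.Perm.sign (σ : Equiv.Perm (Fin 3)) : ℤ) •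
        (Phi K (Module.Dual K M) (σ : Equiv.Perm (Fin 3)) ∘ₗ
          coassociator K (Module.Dual K M) Δ α.dualMap) = 0 ↔
      ∑ σ : G, (Equiv.Perm.sign (σ : Equiv.Perm (Fin 3)) : ℤ) •
        (homAssociator μ α ∘ₗ Phi K M (σ : Equiv.Perm (Fin 3))) = 0 := by
  have transpose := dualDistrib₃_sum_Phi_coassociator G hΔ α
  constructor <;> intro h
  · refine LinearMap.ext fun x => (Module.forall_dual_apply_eq_zero_iff K _).mp fun f => ?_
    simpa [h] using (LinearMap.congr_fun (transpose f) x).symm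
  · refine LinearMap.ext fun f => dualDistrib₃_injective ?_
    rw [transpose, h, LinearMap.comp_zero, LinearMap.zero_apply, map_zero]

set_option synthInstance.maxHeartbeats 1000000 in
open scoped Classical in
/-- the dual of a finite-dimensional `G`-Hom-associative algebra
`(V, μ, α)` is a `G`-Hom-coalgebra, with `Δ = μ*` (transpose of `μ`, using
`V*⊗V* ≅ (V⊗V)*` in finite dimension) and `β = α*`. -/
theorem dual_of_GHomAssociative [FiniteDimensional K M]
    (G : Subgroup (Equiv.Perm (Fin 3)))
    (μ : M ⊗[K] M →ₗ[K] M) (α : M →ₗ[K] M)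
    (hG : ∑ σ : G, ((Equiv.Perm.sign (σ : Equiv.Perm (Fin 3)) : ℤ) •
        ((μ ∘ₗ TensorProduct.map μ α ∘ₗ (TensorProduct.assoc K M M M).symm.toLinearMap
          - μ ∘ₗ TensorProduct.map α μ) ∘ₗ Phi K M (σ : Equiv.Perm (Fin 3)))) = 0) :
    ∑ σ : G, ((Equiv.Perm.sign (σ : Equiv.Perm (Fin 3)) : ℤ) •
      (Phi K (Module.Dual K M) (σ : Equiv.Perm (Fin 3)) ∘ₗ
        coassociator K (Module.Dual K M)
          ((TensorProduct.dualDistribEquiv K M M).symm.toLinearMap ∘ₗ μ.dualMap)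
          α.dualMap)) = 0 := by
  have hΔ : dualDistrib K M M ∘ₗ (dualDistribEquiv K M M).symm.toLinearMap ∘ₗ μ.dualMap =
      μ.dualMap :=
    LinearMap.ext fun f => (dualDistribEquiv K M M).apply_symm_apply _
  exact (dual_of_GHomAssociative_general K M G μ α _ hΔ).mpr hG
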